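/- arXiv:1403.1468 — 3 statements merged into one kernel-verified Lean document; each statement's English description precedes it below -/
import Mathlib

section
/- For the complete graph K_n on n ≥ 2 vertices, S*(K_n) = n(n+1)/2 − 1, where S*(G) is the minimum total storage over all edge-decompositions of G into stars. -/
open Classical

noncomputable section

variable {V : Type*}

/-- An edge-decomposition of `G` into stars: a finite collection of stars, each given by
a designated centre together with a nonempty set of edges of `G` all incident with the
centre, such that the edge sets are pairwise disjoint and cover the edge set of `G`. -/
structure StarDecomposition (G : SimpleGraph V) where
  stars : Finset (V × Finset (Sym2 V))
  star_nonempty : ∀ p ∈ stars, p.2.Nonempty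
  centre_mem : ∀ p ∈ stars, ∀ e ∈ p.2, p.1 ∈ e
  edges_sub : ∀ p ∈ stars, ∀ e ∈ p.2, e ∈ G.edgeSet
  disj : ∀ p ∈ stars, ∀ q ∈ stars, p ≠ q → Disjoint p.2 q.2
  covers : ∀ e ∈ G.edgeSet, ∃ p ∈ stars, e ∈ p.2

namespace StarDecomposition

variable {G : SimpleGraph V}

/-- The storage of a vertex `u`: the number of stars of the decomposition that contain
`u` as a vertex (as centre or leaf). -/
def storage (D : StarDecomposition G) (u : V) : ℕ :=
  (D.stars.filter fun p => ∃ e ∈ p.2, u ∈ e).card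

/-- The number of stars of the decomposition in which `u` is a leaf
(a vertex other than the centre). -/
def leafCount (D : StarDecomposition G) (u : V) : ℕ :=
  (D.stars.filter fun p => u ≠ p.1 ∧ ∃ e ∈ p.2, u ∈ e).card

/-- The total storage of a decomposition: the sum of the storages of all vertices. -/
def totalStorage [Fintype V] (D : StarDecomposition G) : ℕ :=
  ∑ u, D.storage u

end StarDecomposition

/-- `S*(G)`: the minimum total storage over all edge-decompositions of `G` into stars. -/
def SStar [Fintype V] (G : SimpleGraph V) : ℕ :=
  sInf {S | ∃ D : StarDecomposition G, D.totalStorage = S}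

/-- `S_max*(G)`: the minimum, over all edge-decompositions of `G` into stars, of the
maximum storage of a vertex. -/
def SmaxStar (G : SimpleGraph V) : ℕ :=
  sInf {k | ∃ D : StarDecomposition G, ∀ v, D.storage v ≤ k}

/-- The minimum number of stars over all edge-decompositions of `G` into stars. -/
def minStars (G : SimpleGraph V) : ℕ :=
  sInf {k | ∃ D : StarDecomposition G, D.stars.card = k}

/-- An orientation of `G`: each edge is assigned a head (one of its two endpoints);
the other endpoint is its tail. -/
structure EdgeOrientation (G : SimpleGraph V) where
  head : Sym2 V → V
  head_mem : ∀ e ∈ G.edgeSet, head e ∈ e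

namespace EdgeOrientation

variable {G : SimpleGraph V}

/-- The indegree of `v`: the number of edges whose head is `v`. -/
def indeg (o : EdgeOrientation G) (v : V) : ℕ :=
  {e | e ∈ G.edgeSet ∧ o.head e = v}.ncard

/-- The outdegree of `v`: the number of edges incident with `v` whose head is not `v`. -/
def outdeg (o : EdgeOrientation G) (v : V) : ℕ :=
  {e | e ∈ G.edgeSet ∧ v ∈ e ∧ o.head e ≠ v}.ncard

end EdgeOrientation

/-- `MMI(G)`: the minimum over all orientations of `G` of the maximum indegree. -/
def MMI (G : SimpleGraph V) : ℕ :=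
  sInf {k | ∃ o : EdgeOrientation G, ∀ v, o.indeg v ≤ k}

/-- `MMO(G)`: the minimum over all orientations of `G` of the maximum outdegree. -/
def MMO (G : SimpleGraph V) : ℕ :=
  sInf {k | ∃ o : EdgeOrientation G, ∀ v, o.outdeg v ≤ k}

/-- The independence number `α(G)`: the maximum size of a set of vertices no two of
which are adjacent. -/
def indepNum (G : SimpleGraph V) : ℕ :=
  sSup {k | ∃ s : Finset V, (∀ u ∈ s, ∀ v ∈ s, ¬ G.Adj u v) ∧ s.card = k}

end

/-! The `k` edges of a star span `k + 1` vertices, so double counting gives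
`S*(G) = |E(G)| + minStars G`. The centres of a decomposition form a vertex cover, and conversely
assigning each edge to an endpoint in a vertex cover `C` yields at most `|C|` stars; hence
`minStars G` is the vertex cover number of `G`, which is `n - 1` for `K_n`. -/

theorem card_biUnion_toFinset_of_star {V : Type*} {c : V} {S : Finset (Sym2 V)}
    (hne : S.Nonempty) (hc : ∀ e ∈ S, c ∈ e) (hd : ∀ e ∈ S, ¬ e.IsDiag) :
    (S.biUnion Sym2.toFinset).card = S.card + 1 := by
  obtain ⟨L, -, rfl⟩ : ∃ L : Finset V, (L : Set V) ⊆ Set.univ ∧ L.image (s(c, ·)) = S := by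
    refine Finset.subset_set_image_iff.1 fun e he ↦ ?_
    obtain ⟨u, rfl⟩ := Sym2.mem_iff_exists.1 (hc e he)
    exact Set.mem_image_of_mem _ (Set.mem_univ u)
  have c_notMem : c ∉ L := fun h ↦ hd _ (Finset.mem_image_of_mem _ h) rfl
  have vertices_eq : (L.image (s(c, ·))).biUnion Sym2.toFinset = insert c L := by
    ext u
    obtain ⟨v, hv⟩ := Finset.image_nonempty.1 hne
    simp only [Finset.image_biUnion, Sym2.toFinset_mk_eq, Finset.mem_biUnion, Finset.mem_insert,
      Finset.mem_singleton]
    grind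
  rw [vertices_eq, Finset.card_insert_of_notMem c_notMem,
    Finset.card_image_of_injective _ fun _ _ ↦ Sym2.congr_right.1]

namespace EdgeOrientation

variable {V : Type*} {G : SimpleGraph V}

theorem exists_head_mem_of_isVertexCover {C : Set V} (hC : G.IsVertexCover C) :
    ∃ o : EdgeOrientation G, ∀ e ∈ G.edgeSet, o.head e ∈ C := by
  have exists_endpoint (e : Sym2 V) : ∃ v ∈ e, e ∈ G.edgeSet → v ∈ C := by
    induction e with | _ v w
    by_cases hvw : G.Adj v w
    · rcases hC hvw with hv | hw
      · exact ⟨v, Sym2.mem_mk_left v w, fun _ ↦ hv⟩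
      · exact ⟨w, Sym2.mem_mk_right v w, fun _ ↦ hw⟩
    · exact ⟨v, Sym2.mem_mk_left v w, fun h ↦ absurd h hvw⟩
  choose head head_mem head_mem_cover using exists_endpoint
  exact ⟨⟨head, fun e _ ↦ head_mem e⟩, head_mem_cover⟩

variable [Fintype G.edgeSet]

/-- The star decomposition grouping the edges of `G` by their heads, the heads being the centres;
it shows how few stars suffice. Vertices that are no head get no star, as stars are nonempty. -/
noncomputable def toStarDecomposition (o : EdgeOrientation G) : StarDecomposition G where
  stars := (G.edgeFinset.image o.head).image fun c ↦ (c, {e ∈ G.edgeFinset | o.head e = c})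
  star_nonempty := by
    simp only [Finset.forall_mem_image]
    exact fun e he ↦ ⟨e, Finset.mem_filter.2 ⟨he, rfl⟩⟩
  centre_mem := by
    simp only [Finset.forall_mem_image, Finset.mem_filter, SimpleGraph.mem_edgeFinset]
    rintro _ - e ⟨he, hec⟩
    exact hec ▸ o.head_mem e he
  edges_sub := by
    simp only [Finset.forall_mem_image, Finset.mem_filter, SimpleGraph.mem_edgeFinset]
    exact fun _ _ _ he ↦ he.1
  disj := by
    simp only [Finset.forall_mem_image]
    intro e _ f _ hne
    refine Finset.disjoint_filter.2 fun g _ hge hgf ↦ hne ?_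
    rw [← hge, ← hgf]
  covers := fun e he ↦
    have he' := SimpleGraph.mem_edgeFinset.2 he
    ⟨_, Finset.mem_image_of_mem _ (Finset.mem_image_of_mem _ he'),
      Finset.mem_filter.2 ⟨he', rfl⟩⟩

theorem card_stars_toStarDecomposition (o : EdgeOrientation G) :
    o.toStarDecomposition.stars.card = (G.edgeFinset.image o.head).card :=
  Finset.card_image_of_injective _ fun _ _ h ↦ congrArg Prod.fst h

end EdgeOrientation

namespace StarDecomposition

variable {V : Type*} {G : SimpleGraph V}

theorem biUnion_edges_eq_edgeFinset [Fintype G.edgeSet] (D : StarDecomposition G) :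
    D.stars.biUnion Prod.snd = G.edgeFinset := by
  ext e
  simp only [SimpleGraph.mem_edgeFinset, Finset.mem_biUnion]
  exact ⟨fun ⟨p, hp, he⟩ ↦ D.edges_sub p hp e he, D.covers e⟩

theorem sum_card_edges_eq_card_edgeFinset [Fintype G.edgeSet] (D : StarDecomposition G) :
    ∑ p ∈ D.stars, p.2.card = G.edgeFinset.card := by
  rw [← D.biUnion_edges_eq_edgeFinset, Finset.card_biUnion D.disj]

theorem totalStorage_eq_sum_card_vertices [Fintype V] (D : StarDecomposition G) :
    D.totalStorage = ∑ p ∈ D.stars, (p.2.biUnion Sym2.toFinset).card := by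
  have vertices_eq (p : V × Finset (Sym2 V)) :
      p.2.biUnion Sym2.toFinset = ({u | ∃ e ∈ p.2, u ∈ e} : Finset V) := by
    ext u; simp
  simp only [vertices_eq]
  exact Finset.sum_card_bipartiteAbove_eq_sum_card_bipartiteBelow
    fun (u : V) (p : V × Finset (Sym2 V)) ↦ ∃ e ∈ p.2, u ∈ e

theorem totalStorage_eq_card_edgeFinset_add_card_stars [Fintype V] [Fintype G.edgeSet]
    (D : StarDecomposition G) :
    D.totalStorage = G.edgeFinset.card + D.stars.card := by
  have card_vertices : ∀ p ∈ D.stars, (p.2.biUnion Sym2.toFinset).card = p.2.card + 1 :=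
    fun p hp ↦ card_biUnion_toFinset_of_star (D.star_nonempty p hp) (D.centre_mem p hp)
      fun e he ↦ G.not_isDiag_of_mem_edgeSet (D.edges_sub p hp e he)
  rw [totalStorage_eq_sum_card_vertices, Finset.sum_congr rfl card_vertices,
    Finset.sum_add_distrib, sum_card_edges_eq_card_edgeFinset, Finset.card_eq_sum_ones D.stars]

theorem minStars_le_card_stars (D : StarDecomposition G) : minStars G ≤ D.stars.card :=
  Nat.sInf_le ⟨D, rfl⟩

theorem isVertexCover_centres (D : StarDecomposition G) :
    G.IsVertexCover (D.stars.image Prod.fst) := by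
  intro v w hvw
  obtain ⟨p, hp, he⟩ := D.covers s(v, w) hvw
  have centre_mem : p.1 ∈ D.stars.image Prod.fst := Finset.mem_image_of_mem _ hp
  rcases Sym2.mem_iff.1 (D.centre_mem p hp _ he) with h | h
  · exact .inl (h ▸ centre_mem)
  · exact .inr (h ▸ centre_mem)

theorem vertexCoverNum_le_card_stars (D : StarDecomposition G) :
    G.vertexCoverNum ≤ D.stars.card :=
  calc
    G.vertexCoverNum ≤ (D.stars.image Prod.fst).card := by
      simpa only [Set.encard_coe_eq_coe_finsetCard] using D.isVertexCover_centres.vertexCoverNum_le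
    _ ≤ D.stars.card := by exact_mod_cast Finset.card_image_le

end StarDecomposition

section

variable {V : Type*} (G : SimpleGraph V)

theorem exists_card_stars_le_vertexCoverNum [Finite G.edgeSet] :
    ∃ D : StarDecomposition G, D.stars.card ≤ G.vertexCoverNum := by
  have := Fintype.ofFinite G.edgeSet
  obtain ⟨C, hcard, hC⟩ := G.vertexCoverNum_exists
  obtain ⟨o, ho⟩ := EdgeOrientation.exists_head_mem_of_isVertexCover hC
  refine ⟨o.toStarDecomposition, ?_⟩
  rw [o.card_stars_toStarDecomposition, ← hcard, ← Set.encard_coe_eq_coe_finsetCard]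
  refine Set.encard_le_encard ?_
  simpa [Set.subset_def] using ho

theorem exists_card_stars_eq_minStars [Finite G.edgeSet] :
    ∃ D : StarDecomposition G, D.stars.card = minStars G :=
  have ⟨D, _⟩ := exists_card_stars_le_vertexCoverNum G
  Nat.sInf_mem (s := {k | ∃ D : StarDecomposition G, D.stars.card = k}) ⟨_, D, rfl⟩

theorem minStars_eq_vertexCoverNum [Finite G.edgeSet] : minStars G = G.vertexCoverNum := by
  apply le_antisymm
  · obtain ⟨D, hD⟩ := exists_card_stars_le_vertexCoverNum G
    exact le_trans (ENat.natCast_le_natCast.2 D.minStars_le_card_stars) hD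
  · obtain ⟨D, hD⟩ := exists_card_stars_eq_minStars G
    exact hD ▸ D.vertexCoverNum_le_card_stars

theorem SStar_eq_card_edgeFinset_add_minStars [Fintype V] [Fintype G.edgeSet] :
    SStar G = G.edgeFinset.card + minStars G := by
  obtain ⟨D, hD⟩ := exists_card_stars_eq_minStars G
  apply le_antisymm
  · rw [← hD, ← D.totalStorage_eq_card_edgeFinset_add_card_stars]
    exact Nat.sInf_le ⟨D, rfl⟩
  · refine le_csInf ⟨_, D, rfl⟩ ?_
    rintro _ ⟨D', rfl⟩
    rw [D'.totalStorage_eq_card_edgeFinset_add_card_stars]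
    gcongr
    exact D'.minStars_le_card_stars

end

theorem minStars_top (V : Type*) [Fintype V] :
    minStars (⊤ : SimpleGraph V) = Fintype.card V - 1 := by
  have h : (minStars (⊤ : SimpleGraph V) : ℕ∞) = ENat.card V - 1 := by
    rw [minStars_eq_vertexCoverNum, SimpleGraph.vertexCoverNum_top]
  rw [ENat.card_eq_coe_fintype_card] at h
  exact_mod_cast h

theorem SStar_completeGraph_general (V : Type*) [Fintype V] [Nonempty V] :
    SStar (⊤ : SimpleGraph V) = Fintype.card V * (Fintype.card V + 1) / 2 - 1 := by
  set n := Fintype.card V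
  calc
    SStar (⊤ : SimpleGraph V) = n.choose 2 + (n - 1) := by
      rw [SStar_eq_card_edgeFinset_add_minStars,
        SimpleGraph.card_edgeFinset_top_eq_card_choose_two, minStars_top]
    _ = n * (n - 1) / 2 + n - 1 := by
      rw [Nat.choose_two_right, Nat.add_sub_assoc Fintype.card_pos]
    _ = n * (n + 1) / 2 - 1 := by
      rw [← Nat.triangle_succ, Nat.add_sub_cancel, mul_comm]

/-- For the complete graph on `n ≥ 2` vertices,
`S*(K_n) = n(n+1)/2 - 1`. -/
theorem SStar_completeGraph (n : ℕ) (hn : 2 ≤ n) :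
    SStar (⊤ : SimpleGraph (Fin n)) = n * (n + 1) / 2 - 1 := by
  have : NeZero n := .of_gt hn
  simpa only [Fintype.card_fin] using SStar_completeGraph_general (Fin n)
end

section
/- Let G be a finite simple graph and let d denote the maximum degree of a vertex of G. Then S_max*(G) ≤ (d+3)/2 if d is odd, and S_max*(G) ≤ (d+2)/2 if d is even, where S_max*(G) is the minimum over all edge-decompositions of G into stars of the maximum storage of a vertex. -/
open Classical

/-!
Give every edge a head so that no vertex is the head of more than `⌈d/2⌉` edges, and let the edges
with a common tail form a star. A vertex then lies in its own star and in at most one further star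
for each edge of which it is the head, so its storage is at most `⌈d/2⌉ + 1`.

Such heads exist by Hall's theorem applied to `⌈d/2⌉` copies of every vertex: a set of `m` edges has
at least `2m/d` endpoints, because each endpoint meets at most `d` of the edges.
-/

section Hall

variable {ι α : Type*}

theorem exists_forall_mem_forall_encard_fiber_le (t : ι → Finset α) (k : ℕ)
    (hall : ∀ s : Finset ι, s.card ≤ (s.biUnion t).card * k) :
    ∃ f : ι → α, (∀ i, f i ∈ t i) ∧ ∀ a, (f ⁻¹' {a}).encard ≤ k := by
  let copies (i : ι) : Finset (α × Fin k) := t i ×ˢ Finset.univ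
  have hall_copies (s : Finset ι) : s.card ≤ (s.biUnion copies).card := by
    have biUnion_copies : s.biUnion copies = s.biUnion t ×ˢ Finset.univ := by
      ext ⟨a, j⟩
      simp [copies]
    rw [biUnion_copies, Finset.card_product, Finset.card_fin]
    exact hall s
  obtain ⟨g, g_injective, hg⟩ :=
    (Finset.all_card_le_biUnion_card_iff_exists_injective copies).1 hall_copies
  refine ⟨fun i => (g i).1, fun i => (Finset.mem_product.1 (hg i)).1, fun a => ?_⟩
  have copy_injOn : Set.InjOn (fun i => (g i).2) ((fun i => (g i).1) ⁻¹' {a}) :=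
    fun i hi j hj hij => g_injective (Prod.ext (hi.trans hj.symm) hij)
  calc ((fun i => (g i).1) ⁻¹' {a}).encard
      ≤ (Set.univ : Set (Fin k)).encard :=
        Set.encard_le_encard_of_injOn (Set.mapsTo_univ _ _) copy_injOn
    _ = k := by simp

end Hall

section Degree

variable {V : Type*} {G : SimpleGraph V} [G.LocallyFinite] {d : ℕ}

theorem card_mul_two_le_card_biUnion_toFinset_mul (hd : ∀ v, G.degree v ≤ d)
    {s : Finset (Sym2 V)} (hs : ∀ e ∈ s, e ∈ G.edgeSet) :
    s.card * 2 ≤ (s.biUnion Sym2.toFinset).card * d := by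
  refine Finset.card_mul_le_card_mul (fun e v => v ∈ e) (fun e he => ?_) (fun v _ => ?_)
  · rw [← Sym2.card_toFinset_of_not_isDiag e (G.not_isDiag_of_mem_edgeSet (hs e he))]
    refine Finset.card_le_card fun v hv => Finset.mem_bipartiteAbove _ |>.2 ⟨?_, ?_⟩
    · exact Finset.mem_biUnion.2 ⟨e, he, hv⟩
    · exact Sym2.mem_toFinset.1 hv
  · refine le_trans ?_ (hd v)
    rw [← G.card_incidenceFinset_eq_degree v]
    refine Finset.card_le_card fun e he => ?_
    obtain ⟨he, hv⟩ := (Finset.mem_bipartiteBelow _).1 he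
    exact (G.mem_incidenceFinset v e).2 ⟨hs e he, hv⟩

end Degree

namespace EdgeOrientation

variable {V : Type*} {G : SimpleGraph V}

section OfHead

variable (f : G.edgeSet → V) (hf : ∀ e, f e ∈ e.1)

/-- The orientation in which each edge `e` has head `f e`. An orientation also assigns a value to
each non-edge, for which an arbitrary endpoint is taken. -/
noncomputable def ofHead : EdgeOrientation G where
  head := Function.extend Subtype.val f fun e => e.out.1
  head_mem e he := by
    rw [Subtype.val_injective.extend_apply f _ ⟨e, he⟩]
    exact hf ⟨e, he⟩

theorem head_ofHead (e : G.edgeSet) : (ofHead f hf).head e = f e :=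
  Subtype.val_injective.extend_apply f (fun e => e.out.1) e

theorem indeg_ofHead (v : V) : (ofHead f hf).indeg v = (f ⁻¹' {v}).ncard := by
  rw [indeg, ← Set.ncard_image_of_injective _ Subtype.val_injective]
  congr 1
  ext e
  simp only [Set.mem_ofPred_eq, Set.mem_image, Set.mem_preimage, Set.mem_singleton_iff,
    Subtype.exists, exists_and_right, exists_eq_right]
  rw [← exists_prop]
  exact exists_congr fun he => by rw [head_ofHead f hf ⟨e, he⟩]

end OfHead

theorem exists_forall_indeg_le [G.LocallyFinite] {k : ℕ} (hk : ∀ v, G.degree v ≤ 2 * k) :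
    ∃ o : EdgeOrientation G, ∀ v, o.indeg v ≤ k := by
  have hall (s : Finset G.edgeSet) :
      s.card ≤ (s.biUnion fun e => e.1.toFinset).card * k := by
    have double_count := card_mul_two_le_card_biUnion_toFinset_mul hk
      (s := s.map (Function.Embedding.subtype _))
      fun e he => Finset.property_of_mem_map_subtype s he
    rw [Finset.card_map, Finset.map_eq_image, Finset.image_biUnion] at double_count
    simp only [Function.Embedding.subtype_apply] at double_count
    linarith
  obtain ⟨f, f_mem, fiber_le⟩ := exists_forall_mem_forall_encard_fiber_le _ k hall
  refine ⟨ofHead f fun e => Sym2.mem_toFinset.1 (f_mem e), fun v => ?_⟩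
  rw [indeg_ofHead]
  exact (Set.encard_le_coe_iff_finite_ncard_le.1 (fiber_le v)).2

/-- The endpoint of an edge other than its head. -/
noncomputable def tail (o : EdgeOrientation G) (e : G.edgeSet) : V :=
  Sym2.Mem.other (o.head_mem e e.2)

theorem mk_head_tail (o : EdgeOrientation G) (e : G.edgeSet) : s(o.head e, o.tail e) = e.1 :=
  Sym2.other_spec _

theorem tail_mem (o : EdgeOrientation G) (e : G.edgeSet) : o.tail e ∈ e.1 :=
  Sym2.other_mem _

section Stars

variable [Fintype G.edgeSet] (o : EdgeOrientation G)

/-- The star of all edges with tail `v`, paired with its centre `v` as in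
`StarDecomposition.stars`. The edge set may be empty. -/
noncomputable def outStar (v : V) : V × Finset (Sym2 V) :=
  (v, (Finset.univ.filter fun e => o.tail e = v).map (Function.Embedding.subtype _))

theorem mem_outStar {v : V} {e : Sym2 V} :
    e ∈ (o.outStar v).2 ↔ ∃ he : e ∈ G.edgeSet, o.tail ⟨e, he⟩ = v := by
  simp [outStar]

/-- The decomposition of `G` into the nonempty stars `o.outStar v`. Taking for `v` the tails of the
edges singles out the nonempty ones. -/
noncomputable def starDecomposition : StarDecomposition G where
  stars := Finset.univ.image fun e => o.outStar (o.tail e)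
  star_nonempty := by
    simp only [Finset.mem_image, Finset.mem_univ, true_and]
    rintro _ ⟨e, rfl⟩
    exact ⟨e, o.mem_outStar.2 ⟨e.2, rfl⟩⟩
  centre_mem := by
    simp only [Finset.mem_image, Finset.mem_univ, true_and]
    rintro _ ⟨e', rfl⟩ e he
    obtain ⟨he, tail_eq⟩ := o.mem_outStar.1 he
    exact tail_eq ▸ o.tail_mem ⟨e, he⟩
  edges_sub := by
    simp only [Finset.mem_image, Finset.mem_univ, true_and]
    rintro _ ⟨e', rfl⟩ e he
    exact (o.mem_outStar.1 he).1
  disj := by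
    simp only [Finset.mem_image, Finset.mem_univ, true_and]
    rintro _ ⟨e₁, rfl⟩ _ ⟨e₂, rfl⟩ star_ne
    refine Finset.disjoint_left.2 fun e he₁ he₂ => star_ne ?_
    obtain ⟨_, tail_eq₁⟩ := o.mem_outStar.1 he₁
    obtain ⟨_, tail_eq₂⟩ := o.mem_outStar.1 he₂
    rw [← tail_eq₁, ← tail_eq₂]
  covers e he :=
    ⟨o.outStar (o.tail ⟨e, he⟩), Finset.mem_image_of_mem _ (Finset.mem_univ _),
      o.mem_outStar.2 ⟨he, rfl⟩⟩

theorem storage_starDecomposition_le (v : V) :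
    o.starDecomposition.storage v ≤ o.indeg v + 1 := by
  let inEdges : Finset G.edgeSet := Finset.univ.filter fun e => o.head e = v
  have card_inEdges : inEdges.card = o.indeg v := by
    rw [indeg, ← Finset.card_map (Function.Embedding.subtype _), ← Set.ncard_coe_finset]
    congr 1
    ext e
    simp [inEdges, and_comm]
  have stars_subset : (o.starDecomposition.stars.filter fun p => ∃ e ∈ p.2, v ∈ e) ⊆
      insert (o.outStar v) (inEdges.image fun e => o.outStar (o.tail e)) := by
    simp only [starDecomposition, Finset.subset_iff, Finset.mem_filter, Finset.mem_image,
      Finset.mem_univ, true_and, Finset.mem_insert]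
    rintro _ ⟨⟨e', rfl⟩, e, he, hv⟩
    obtain ⟨he, tail_eq⟩ := o.mem_outStar.1 he
    rw [show e = s(_, _) from (o.mk_head_tail ⟨e, he⟩).symm, Sym2.mem_iff] at hv
    rw [← tail_eq]
    rcases hv with v_head | v_tail
    · exact Or.inr ⟨⟨e, he⟩, by simp [inEdges, v_head], rfl⟩
    · exact Or.inl (by rw [v_tail])
  calc o.starDecomposition.storage v
      ≤ (insert (o.outStar v) (inEdges.image fun e => o.outStar (o.tail e))).card :=
        Finset.card_le_card stars_subset
    _ ≤ (inEdges.image fun e => o.outStar (o.tail e)).card + 1 := Finset.card_insert_le _ _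
    _ ≤ o.indeg v + 1 := by grw [Finset.card_image_le, card_inEdges]

end Stars

end EdgeOrientation

section Bounds

variable {V : Type*} (G : SimpleGraph V)

theorem exists_forall_indeg_le_MMI [Finite G.edgeSet] :
    ∃ o : EdgeOrientation G, ∀ v, o.indeg v ≤ MMI G := by
  let o : EdgeOrientation G := .ofHead (fun e => e.1.out.1) fun e => e.1.out_fst_mem
  exact Nat.sInf_mem (s := {k | ∃ o : EdgeOrientation G, ∀ v, o.indeg v ≤ k})
    ⟨G.edgeSet.ncard, o, fun v => Set.ncard_le_ncard (fun e he => he.1) G.edgeSet.toFinite⟩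

theorem SmaxStar_le_MMI_add_one [Finite G.edgeSet] : SmaxStar G ≤ MMI G + 1 := by
  have := Fintype.ofFinite G.edgeSet
  obtain ⟨o, indeg_le⟩ := exists_forall_indeg_le_MMI G
  exact Nat.sInf_le ⟨o.starDecomposition, fun v =>
    (o.storage_starDecomposition_le v).trans (Nat.add_le_add_right (indeg_le v) 1)⟩

theorem MMI_le_of_forall_degree_le [G.LocallyFinite] {k : ℕ} (hk : ∀ v, G.degree v ≤ 2 * k) :
    MMI G ≤ k :=
  Nat.sInf_le (EdgeOrientation.exists_forall_indeg_le hk)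

theorem SmaxStar_le_of_maxDegree_general [Finite G.edgeSet] [G.LocallyFinite] {d : ℕ}
    (hd : ∀ v, G.degree v ≤ d) : SmaxStar G ≤ (d + 3) / 2 :=
  calc SmaxStar G
      ≤ MMI G + 1 := SmaxStar_le_MMI_add_one G
    _ ≤ (d + 1) / 2 + 1 := by
        grw [MMI_le_of_forall_degree_le G fun v => (hd v).trans (by lia : d ≤ 2 * ((d + 1) / 2))]
    _ = (d + 3) / 2 := by lia

end Bounds

/-- If `d` is the maximum degree of `G`, then
`S_max*(G) ≤ (d+3)/2` if `d` is odd and `S_max*(G) ≤ (d+2)/2` if `d` is even. -/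
theorem SmaxStar_le_of_maxDegree {V : Type*} [Fintype V] (G : SimpleGraph V)
    [DecidableRel G.Adj] :
    (Odd G.maxDegree → SmaxStar G ≤ (G.maxDegree + 3) / 2) ∧
      (Even G.maxDegree → SmaxStar G ≤ (G.maxDegree + 2) / 2) := by
  have le_of_degree := SmaxStar_le_of_maxDegree_general G G.degree_le_maxDegree
  exact ⟨fun _ => le_of_degree, fun ⟨m, hm⟩ => by lia⟩
end

section
/- Let G be a finite simple graph with n vertices (n ≥ 1), ε edges, and independence number α(G). Then S_max*(G) ≥ ⌈(n + ε − α(G))/n⌉, where S_max*(G) is the minimum over all edge-decompositions of G into stars of the maximum storage of a vertex. -/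
open Classical

/-!
A star with `k` edges has `k + 1` vertices, so counting pairs (star, vertex of it) in two ways shows
that the total storage of a decomposition into `m` stars is at least `m + ε`. Every edge contains
the centre of its star, so the centres form a vertex cover, whose complement is independent;
hence `n ≤ m + α(G)`. Since `n` times the maximum storage bounds the total storage, the maximum
storage is at least `(n + ε - α(G)) / n`.
-/

noncomputable section Endpoints

variable {V : Type*}

/-- The set of vertices covered by a finite set `S` of edges; when `S` is the edge set of a star,
these are the centre and the leaves of the star. -/
def endpoints (S : Finset (Sym2 V)) : Finset V :=
  S.biUnion Sym2.toFinset

theorem mem_endpoints {S : Finset (Sym2 V)} {v : V} : v ∈ endpoints S ↔ ∃ e ∈ S, v ∈ e := by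
  simp only [endpoints, Finset.mem_biUnion, Sym2.mem_toFinset]

theorem card_lt_card_endpoints_of_forall_mem {S : Finset (Sym2 V)} {c : V}
    (hne : S.Nonempty) (hc : ∀ e ∈ S, c ∈ e) (hdiag : ∀ e ∈ S, ¬e.IsDiag) :
    S.card < (endpoints S).card := by
  have hc_mem : c ∈ endpoints S :=
    let ⟨e, he⟩ := hne
    mem_endpoints.2 ⟨e, he, hc e he⟩
  have hsub : S ⊆ ((endpoints S).erase c).image fun v => s(c, v) := by
    intro e he
    obtain ⟨v, rfl⟩ := Sym2.mem_iff_exists.1 (hc e he)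
    have hvc : v ≠ c := fun h => hdiag _ he h.symm
    have hv : v ∈ endpoints S := mem_endpoints.2 ⟨_, he, Sym2.mem_mk_right c v⟩
    exact Finset.mem_image_of_mem _ (Finset.mem_erase.2 ⟨hvc, hv⟩)
  calc S.card ≤ ((endpoints S).erase c).card :=
        (Finset.card_le_card hsub).trans Finset.card_image_le
    _ < (endpoints S).card := Finset.card_erase_lt_of_mem hc_mem

end Endpoints

theorem indepNum_eq_simpleGraph_indepNum {V : Type*} (G : SimpleGraph V) :
    indepNum G = G.indepNum := by
  have h_iff (s : Finset V) : (∀ u ∈ s, ∀ v ∈ s, ¬G.Adj u v) ↔ G.IsIndepSet s :=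
    ⟨fun h u hu v hv _ => h u hu v hv, fun h u hu v hv huv => h hu hv huv.ne huv⟩
  simp only [indepNum, SimpleGraph.indepNum, SimpleGraph.isNIndepSet_iff, h_iff]

namespace StarDecomposition

variable {V : Type*} {G : SimpleGraph V}

noncomputable section Counting

variable (D : StarDecomposition G)

theorem storage_le_card_stars (u : V) : D.storage u ≤ D.stars.card :=
  Finset.card_filter_le _ _

theorem totalStorage_eq_sum_card_endpoints [Fintype V] :
    D.totalStorage = ∑ p ∈ D.stars, (endpoints p.2).card := by
  have h_endpoints (p : V × Finset (Sym2 V)) :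
      endpoints p.2 = Finset.univ.filter fun u => ∃ e ∈ p.2, u ∈ e := by
    ext u
    simp only [mem_endpoints, Finset.mem_filter_univ]
  simp only [h_endpoints]
  exact Finset.sum_card_bipartiteAbove_eq_sum_card_bipartiteBelow _

theorem totalStorage_le_card_mul [Fintype V] {k : ℕ} (hk : ∀ u, D.storage u ≤ k) :
    D.totalStorage ≤ Fintype.card V * k :=
  Finset.sum_le_card_nsmul _ _ k fun u _ => hk u

theorem ncard_edgeSet_eq_sum_card : G.edgeSet.ncard = ∑ p ∈ D.stars, p.2.card := by
  have h_union : G.edgeSet = D.stars.biUnion Prod.snd := by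
    ext e
    simp only [Finset.mem_coe, Finset.mem_biUnion]
    exact ⟨D.covers e, fun ⟨p, hp, he⟩ => D.edges_sub p hp e he⟩
  rw [h_union, Set.ncard_coe_finset, Finset.card_biUnion D.disj]

theorem card_lt_card_endpoints {p : V × Finset (Sym2 V)} (hp : p ∈ D.stars) :
    p.2.card < (endpoints p.2).card :=
  card_lt_card_endpoints_of_forall_mem (D.star_nonempty p hp) (D.centre_mem p hp)
    fun e he => G.not_isDiag_of_mem_edgeSet (D.edges_sub p hp e he)

theorem card_stars_add_ncard_edgeSet_le_totalStorage [Fintype V] :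
    D.stars.card + G.edgeSet.ncard ≤ D.totalStorage :=
  calc D.stars.card + G.edgeSet.ncard
      = ∑ p ∈ D.stars, (1 + p.2.card) := by
        rw [D.ncard_edgeSet_eq_sum_card, Finset.sum_add_distrib, Finset.card_eq_sum_ones]
    _ ≤ ∑ p ∈ D.stars, (endpoints p.2).card := by
        refine Finset.sum_le_sum fun p hp => ?_
        rw [Nat.add_comm]
        exact D.card_lt_card_endpoints hp
    _ = D.totalStorage := D.totalStorage_eq_sum_card_endpoints.symm

/-- The set of centres of the stars of a decomposition; several stars may share a centre. -/
def centres : Finset V :=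
  D.stars.image Prod.fst

theorem card_centres_le : D.centres.card ≤ D.stars.card :=
  Finset.card_image_le

theorem isVertexCover_centres_s8 : G.IsVertexCover D.centres := by
  intro u v huv
  obtain ⟨p, hp, he⟩ := D.covers s(u, v) huv
  have hpc : p.1 ∈ D.centres := Finset.mem_image_of_mem _ hp
  obtain hu | hv : p.1 = u ∨ p.1 = v := Sym2.mem_iff.1 (D.centre_mem p hp _ he)
  · exact Or.inl (hu ▸ hpc)
  · exact Or.inr (hv ▸ hpc)

theorem card_le_card_stars_add_indepNum [Fintype V] :
    Fintype.card V ≤ D.stars.card + indepNum G := by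
  have h_indep : G.IsIndepSet (D.centresᶜ : Finset V) := by
    rw [Finset.coe_compl, SimpleGraph.isIndepSet_compl_iff_isVertexCover]
    exact D.isVertexCover_centres_s8
  calc Fintype.card V = D.centres.card + D.centresᶜ.card := D.centres.card_add_card_compl.symm
    _ ≤ D.stars.card + indepNum G := by
        rw [indepNum_eq_simpleGraph_indepNum]
        exact Nat.add_le_add D.card_centres_le h_indep.card_le_indepNum

end Counting

noncomputable section Existence

/-- The decomposition of a graph with finitely many edges into its single edges, each centred at an
arbitrary endpoint. It shows that the infimum defining `SmaxStar` is attained. -/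
def ofSingleEdges (hG : G.edgeSet.Finite) : StarDecomposition G where
  stars := hG.toFinset.image fun e => (e.out.1, {e})
  star_nonempty := by
    simp only [Finset.forall_mem_image, Finset.singleton_nonempty, implies_true]
  centre_mem := by
    simp only [Finset.forall_mem_image, Finset.mem_singleton, forall_eq, Sym2.out_fst_mem,
      implies_true]
  edges_sub := by
    simp only [Finset.forall_mem_image, Finset.mem_singleton, forall_eq, Set.Finite.mem_toFinset,
      imp_self, implies_true]
  disj := by
    simp only [Finset.forall_mem_image, Finset.disjoint_singleton]
    rintro e - f - hef rfl
    exact hef rfl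
  covers e he :=
    ⟨(e.out.1, {e}), Finset.mem_image_of_mem _ (hG.mem_toFinset.2 he), Finset.mem_singleton_self e⟩

theorem exists_storage_le_SmaxStar (hG : G.edgeSet.Finite) :
    ∃ D : StarDecomposition G, ∀ v, D.storage v ≤ SmaxStar G :=
  Nat.sInf_mem (s := {k | ∃ D : StarDecomposition G, ∀ v, D.storage v ≤ k})
    ⟨_, ofSingleEdges hG, (ofSingleEdges hG).storage_le_card_stars⟩

end Existence

end StarDecomposition

/-- For a graph on `n ≥ 1` vertices with `ε` edges,
`S_max*(G) ≥ ⌈(n + ε - α(G))/n⌉` (the ceiling is expressed as `(x + n - 1)/n`). -/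
theorem SmaxStar_lower_bound {V : Type*} [Fintype V] [Nonempty V] (G : SimpleGraph V) :
    (Fintype.card V + G.edgeSet.ncard - indepNum G + (Fintype.card V - 1)) / Fintype.card V
      ≤ SmaxStar G := by
  obtain ⟨D, hD⟩ := StarDecomposition.exists_storage_le_SmaxStar G.edgeSet.toFinite
  have h_stars : Fintype.card V ≤ D.stars.card + indepNum G := D.card_le_card_stars_add_indepNum
  have h_total : D.stars.card + G.edgeSet.ncard ≤ Fintype.card V * SmaxStar G :=
    D.card_stars_add_ncard_edgeSet_le_totalStorage.trans (D.totalStorage_le_card_mul hD)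
  have h_bound : Fintype.card V + G.edgeSet.ncard - indepNum G ≤ Fintype.card V * SmaxStar G := by
    omega
  rw [Nat.div_le_iff_le_mul_add_pred Fintype.card_pos]
  exact Nat.add_le_add_right h_bound _
end
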